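/- arXiv:2103.16691 — 2 statements merged into one kernel-verified Lean document; each statement's English description precedes it below -/
import Mathlib

section
/- Let p, r ∈ k be nonzero and let f(u,v) = p·u³ + r·v³. If there is no λ ∈ k with λ³ = p/r, then the stabilizer of f in GL₂(k) under the action by linear substitution of variables is exactly the set of diagonal matrices {diag(ω^i, ω^j) : 0 ≤ i, j ≤ 2}; in particular it is a group of order 9 isomorphic to Z/3Z × Z/3Z. -/
noncomputable section

open MvPolynomial

/-- The binary cubic form a₀u³ + a₁u²v + a₂uv² + a₃v³ as a polynomial in u = X 0, v = X 1. -/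
def cubicForm (k : Type*) [Field k] (a₀ a₁ a₂ a₃ : k) : MvPolynomial (Fin 2) k :=
  C a₀ * X 0 ^ 3 + C a₁ * X 0 ^ 2 * X 1 + C a₂ * X 0 * X 1 ^ 2 + C a₃ * X 1 ^ 3

/-- The discriminant of the binary cubic form a₀u³ + a₁u²v + a₂uv² + a₃v³. -/
def cubicDisc (k : Type*) [Field k] (a₀ a₁ a₂ a₃ : k) : k :=
  -27 * a₀ ^ 2 * a₃ ^ 2 + a₁ ^ 2 * a₂ ^ 2 + 18 * a₀ * a₁ * a₂ * a₃ -
    4 * a₀ * a₂ ^ 3 - 4 * a₁ ^ 3 * a₃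

/-- The action of `GL₂(k)` on binary cubic forms by linear substitution of the variables:
for `M = [[a,b],[c,d]]`, `(M·f)(u,v) = f(au + bv, cu + dv)`. -/
def glAct (k : Type*) [Field k] (M : GL (Fin 2) k) (p : MvPolynomial (Fin 2) k) :
    MvPolynomial (Fin 2) k :=
  aeval (fun i : Fin 2 =>
    C ((M : Matrix (Fin 2) (Fin 2) k) i 0) * X 0 +
      C ((M : Matrix (Fin 2) (Fin 2) k) i 1) * X 1) p

end

/-!
Comparing coefficients, `M = [[a, b], [c, d]]` fixes `pu³ + rv³` exactly when
`pa³ + rc³ = p`, `3(pa²b + rc²d) = 0`, `3(pab² + rcd²) = 0` and `pb³ + rd³ = r`.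
If `3 ≠ 0`, eliminating between the two middle equations gives `ab · det M = cd · det M = 0`.
Since `p/r` is not a cube, the first equation forbids `a = 0`, so `M` is diagonal.
In characteristic three the middle equations are void, but the outer ones become
`p(1 - a)³ = rc³` and `pb³ = r(1 - d)³`, and again `p/r` not being a cube forces `b = c = 0`.
A diagonal `M` fixes the form exactly when `a³ = d³ = 1`.
-/

/-- The embedding of the diagonal torus of pairs of units into `GL₂(R)`, sending `(a, d)` to
`diag(a, d)`. It is bundled as a group homomorphism so that the stabilizers below are images of
subgroups. -/
def diagonalGL (R : Type*) [CommRing R] : Rˣ × Rˣ →* GL (Fin 2) R where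
  toFun t :=
    { val := !![(t.1 : R), 0; 0, (t.2 : R)]
      inv := !![((t.1⁻¹ : Rˣ) : R), 0; 0, ((t.2⁻¹ : Rˣ) : R)]
      val_inv := by simp [Matrix.one_fin_two]
      inv_val := by simp [Matrix.one_fin_two] }
  map_one' := Units.ext (by simp [Matrix.one_fin_two])
  map_mul' s t := Units.ext (by simp)

section DiagonalTorus

variable {R : Type*} [CommRing R]

theorem coe_diagonalGL (t : Rˣ × Rˣ) :
    (diagonalGL R t : Matrix (Fin 2) (Fin 2) R) = !![(t.1 : R), 0; 0, (t.2 : R)] :=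
  rfl

theorem diagonalGL_injective : Function.Injective (diagonalGL R) := by
  intro s t h
  have hmat := congrArg (Units.val : GL (Fin 2) R → Matrix (Fin 2) (Fin 2) R) h
  simpa [coe_diagonalGL, Prod.ext_iff, Units.ext_iff] using hmat

theorem ncard_map_diagonalGL_prod (H K : Subgroup Rˣ) :
    ((H.prod K).map (diagonalGL R) : Set (GL (Fin 2) R)).ncard = Nat.card H * Nat.card K := by
  rw [← Nat.card_prod, ← Nat.card_congr (H.prodEquiv K).toEquiv]
  exact Subgroup.card_map_of_injective diagonalGL_injective

theorem mem_map_diagonalGL_rootsOfUnity_iff {n : ℕ} [NeZero n] {M : GL (Fin 2) R} :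
    M ∈ ((rootsOfUnity n R).prod (rootsOfUnity n R)).map (diagonalGL R) ↔
      ∃ a d : R, a ^ n = 1 ∧ d ^ n = 1 ∧
        (M : Matrix (Fin 2) (Fin 2) R) = !![a, 0; 0, d] := by
  constructor
  · rintro ⟨⟨a, d⟩, ⟨ha, hd⟩, rfl⟩
    exact ⟨a, d, (mem_rootsOfUnity' n a).1 ha, (mem_rootsOfUnity' n d).1 hd, rfl⟩
  · rintro ⟨a, d, ha, hd, hM⟩
    exact ⟨(rootsOfUnity.mkOfPowEq a ha, rootsOfUnity.mkOfPowEq d hd),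
      ⟨SetLike.coe_mem _, SetLike.coe_mem _⟩, Units.ext hM.symm⟩

theorem coe_map_diagonalGL_rootsOfUnity [IsDomain R] {n : ℕ} [NeZero n] {ω : R}
    (hω : IsPrimitiveRoot ω n) :
    (((rootsOfUnity n R).prod (rootsOfUnity n R)).map (diagonalGL R) : Set (GL (Fin 2) R)) =
      {M : GL (Fin 2) R | ∃ i j : Fin n,
        (M : Matrix (Fin 2) (Fin 2) R) = !![ω ^ (i : ℕ), 0; 0, ω ^ (j : ℕ)]} := by
  have pow_pow_eq_one (i : ℕ) : (ω ^ i) ^ n = 1 := by rw [pow_right_comm, hω.pow_eq_one, one_pow]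
  ext M
  rw [SetLike.mem_coe, mem_map_diagonalGL_rootsOfUnity_iff]
  constructor
  · rintro ⟨a, d, ha, hd, hM⟩
    obtain ⟨i, hi, rfl⟩ := hω.eq_pow_of_pow_eq_one ha
    obtain ⟨j, hj, rfl⟩ := hω.eq_pow_of_pow_eq_one hd
    exact ⟨⟨i, hi⟩, ⟨j, hj⟩, hM⟩
  · rintro ⟨i, j, hM⟩
    exact ⟨ω ^ (i : ℕ), ω ^ (j : ℕ), pow_pow_eq_one i, pow_pow_eq_one j, hM⟩

end DiagonalTorus

section CubicForm

variable {k : Type*} [Field k]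

theorem cubicForm_inj {a₀ a₁ a₂ a₃ b₀ b₁ b₂ b₃ : k} :
    cubicForm k a₀ a₁ a₂ a₃ = cubicForm k b₀ b₁ b₂ b₃ ↔
      a₀ = b₀ ∧ a₁ = b₁ ∧ a₂ = b₂ ∧ a₃ = b₃ := by
  have dehomogenize (c₀ c₁ c₂ c₃ : k) :
      MvPolynomial.aeval ![Polynomial.X, 1] (cubicForm k c₀ c₁ c₂ c₃) =
        (Cubic.mk c₀ c₁ c₂ c₃).toPoly := by
    simp [cubicForm, Cubic.toPoly]
  constructor
  · intro h
    have hpoly := congrArg (MvPolynomial.aeval ![(Polynomial.X : Polynomial k), 1]) h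
    rw [dehomogenize, dehomogenize] at hpoly
    simpa using (Cubic.toPoly_injective _ _).1 hpoly
  · rintro ⟨rfl, rfl, rfl, rfl⟩
    rfl

theorem glAct_cubicForm {M : GL (Fin 2) k} {a b c d : k}
    (hM : (M : Matrix (Fin 2) (Fin 2) k) = !![a, b; c, d]) (a₀ a₁ a₂ a₃ : k) :
    glAct k M (cubicForm k a₀ a₁ a₂ a₃) =
      cubicForm k
        (a₀ * a ^ 3 + a₁ * a ^ 2 * c + a₂ * a * c ^ 2 + a₃ * c ^ 3)
        (3 * a₀ * a ^ 2 * b + a₁ * (a ^ 2 * d + 2 * a * b * c) +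
          a₂ * (2 * a * c * d + b * c ^ 2) + 3 * a₃ * c ^ 2 * d)
        (3 * a₀ * a * b ^ 2 + a₁ * (2 * a * b * d + b ^ 2 * c) +
          a₂ * (a * d ^ 2 + 2 * b * c * d) + 3 * a₃ * c * d ^ 2)
        (a₀ * b ^ 3 + a₁ * b ^ 2 * d + a₂ * b * d ^ 2 + a₃ * d ^ 3) := by
  have C_two : (MvPolynomial.C 2 : MvPolynomial (Fin 2) k) = 2 := map_ofNat _ 2
  have C_three : (MvPolynomial.C 3 : MvPolynomial (Fin 2) k) = 3 := map_ofNat _ 3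
  simp only [glAct, cubicForm, hM, map_add, map_mul, map_pow, MvPolynomial.aeval_X,
    MvPolynomial.aeval_C, MvPolynomial.algebraMap_eq, Matrix.of_apply, Matrix.cons_val_zero,
    Matrix.cons_val_one, C_two, C_three]
  ring

theorem glAct_cubicForm_eq_self_iff {M : GL (Fin 2) k} {a b c d : k}
    (hM : (M : Matrix (Fin 2) (Fin 2) k) = !![a, b; c, d]) (p r : k) :
    glAct k M (cubicForm k p 0 0 r) = cubicForm k p 0 0 r ↔
      p * a ^ 3 + r * c ^ 3 = p ∧ 3 * (p * a ^ 2 * b + r * c ^ 2 * d) = 0 ∧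
        3 * (p * a * b ^ 2 + r * c * d ^ 2) = 0 ∧ p * b ^ 3 + r * d ^ 3 = r := by
  rw [glAct_cubicForm hM, cubicForm_inj]
  ring_nf

end CubicForm

theorem mul_eq_zero_of_mixed_coeff_eq_zero {R : Type*} [CommRing R] [NoZeroDivisors R]
    {p r a b c d : R} (hp : p ≠ 0) (hr : r ≠ 0) (hdet : a * d - b * c ≠ 0)
    (h₁ : p * a ^ 2 * b + r * c ^ 2 * d = 0) (h₂ : p * a * b ^ 2 + r * c * d ^ 2 = 0) :
    a * b = 0 ∧ c * d = 0 := by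
  constructor
  · refine (mul_eq_zero.1 ?_).resolve_left (mul_ne_zero hp hdet)
    linear_combination d * h₁ - c * h₂
  · refine (mul_eq_zero.1 ?_).resolve_left (mul_ne_zero hr hdet)
    linear_combination a * h₂ - b * h₁

section NonCube

variable {k : Type*} [Field k] {p r : k}

theorem left_ne_zero_of_not_exists_pow_eq_div {n : ℕ} (hn : n ≠ 0)
    (hpr : ¬ ∃ lam : k, lam ^ n = p / r) : p ≠ 0 := by
  rintro rfl
  exact hpr ⟨0, by simp [hn]⟩

theorem right_ne_zero_of_not_exists_pow_eq_div {n : ℕ} (hn : n ≠ 0)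
    (hpr : ¬ ∃ lam : k, lam ^ n = p / r) : r ≠ 0 := by
  -- the junk value `p / 0 = 0` is an `n`-th power
  rintro rfl
  exact hpr ⟨0, by simp [hn]⟩

theorem eq_zero_of_mul_pow_eq_mul_pow {n : ℕ} (hn : n ≠ 0) (hpr : ¬ ∃ lam : k, lam ^ n = p / r)
    {x y : k} (h : p * x ^ n = r * y ^ n) : x = 0 ∧ y = 0 := by
  have hr : r ≠ 0 := right_ne_zero_of_not_exists_pow_eq_div hn hpr
  have hx : x = 0 := by
    by_contra hx
    refine hpr ⟨y / x, ?_⟩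
    rw [div_pow, div_eq_div_iff (pow_ne_zero n hx) hr]
    linear_combination -h
  refine ⟨hx, ?_⟩
  simpa [hx, hn, hr] using h

theorem offDiag_eq_zero_of_three_eq_zero (h3 : (3 : k) = 0) (hpr : ¬ ∃ lam : k, lam ^ 3 = p / r)
    {a b c d : k} (h₀ : p * a ^ 3 + r * c ^ 3 = p) (h₃ : p * b ^ 3 + r * d ^ 3 = r) :
    b = 0 ∧ c = 0 := by
  have hac : p * (1 - a) ^ 3 = r * c ^ 3 := by
    linear_combination -h₀ + p * (a ^ 2 - a) * h3
  have hbd : p * b ^ 3 = r * (1 - d) ^ 3 := by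
    linear_combination h₃ - r * (d ^ 2 - d) * h3
  exact ⟨(eq_zero_of_mul_pow_eq_mul_pow three_ne_zero hpr hbd).1,
    (eq_zero_of_mul_pow_eq_mul_pow three_ne_zero hpr hac).2⟩

theorem offDiag_eq_zero_of_three_ne_zero (h3 : (3 : k) ≠ 0)
    (hpr : ¬ ∃ lam : k, lam ^ 3 = p / r) {a b c d : k} (hdet : a * d - b * c ≠ 0)
    (h₀ : p * a ^ 3 + r * c ^ 3 = p) (h₁ : 3 * (p * a ^ 2 * b + r * c ^ 2 * d) = 0)
    (h₂ : 3 * (p * a * b ^ 2 + r * c * d ^ 2) = 0) : b = 0 ∧ c = 0 := by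
  have hp : p ≠ 0 := left_ne_zero_of_not_exists_pow_eq_div three_ne_zero hpr
  have hr : r ≠ 0 := right_ne_zero_of_not_exists_pow_eq_div three_ne_zero hpr
  obtain ⟨hab, hcd⟩ := mul_eq_zero_of_mixed_coeff_eq_zero hp hr hdet
    ((mul_eq_zero.1 h₁).resolve_left h3) ((mul_eq_zero.1 h₂).resolve_left h3)
  have ha : a ≠ 0 := by
    rintro rfl
    have hc : p * 1 ^ 3 = r * c ^ 3 := by linear_combination -h₀
    exact one_ne_zero (eq_zero_of_mul_pow_eq_mul_pow three_ne_zero hpr hc).1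
  have hb : b = 0 := (mul_eq_zero.1 hab).resolve_left ha
  have hd : d ≠ 0 := by
    rintro rfl
    exact hdet (by simp [hb])
  exact ⟨hb, (mul_eq_zero.1 hcd).resolve_right hd⟩

theorem offDiag_eq_zero (hpr : ¬ ∃ lam : k, lam ^ 3 = p / r) {a b c d : k}
    (hdet : a * d - b * c ≠ 0) (h₀ : p * a ^ 3 + r * c ^ 3 = p)
    (h₁ : 3 * (p * a ^ 2 * b + r * c ^ 2 * d) = 0)
    (h₂ : 3 * (p * a * b ^ 2 + r * c * d ^ 2) = 0)
    (h₃ : p * b ^ 3 + r * d ^ 3 = r) : b = 0 ∧ c = 0 := by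
  by_cases h3 : (3 : k) = 0
  · exact offDiag_eq_zero_of_three_eq_zero h3 hpr h₀ h₃
  · exact offDiag_eq_zero_of_three_ne_zero h3 hpr hdet h₀ h₁ h₂

theorem glAct_cubicForm_eq_self_iff_mem (hpr : ¬ ∃ lam : k, lam ^ 3 = p / r) (M : GL (Fin 2) k) :
    glAct k M (cubicForm k p 0 0 r) = cubicForm k p 0 0 r ↔
      M ∈ ((rootsOfUnity 3 k).prod (rootsOfUnity 3 k)).map (diagonalGL k) := by
  rw [mem_map_diagonalGL_rootsOfUnity_iff]
  constructor
  · intro h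
    obtain ⟨a, b, c, d, hM⟩ : ∃ a b c d : k, (M : Matrix (Fin 2) (Fin 2) k) = !![a, b; c, d] :=
      ⟨_, _, _, _, Matrix.eta_fin_two _⟩
    have hdet : a * d - b * c ≠ 0 := by
      rw [← Matrix.det_fin_two_of, ← hM]
      exact M.det_ne_zero
    obtain ⟨h₀, h₁, h₂, h₃⟩ := (glAct_cubicForm_eq_self_iff hM p r).1 h
    obtain ⟨rfl, rfl⟩ := offDiag_eq_zero hpr hdet h₀ h₁ h₂ h₃
    have hp : p ≠ 0 := left_ne_zero_of_not_exists_pow_eq_div three_ne_zero hpr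
    have hr : r ≠ 0 := right_ne_zero_of_not_exists_pow_eq_div three_ne_zero hpr
    have ha : a ^ 3 = 1 := mul_left_cancel₀ hp (by linear_combination h₀)
    have hd : d ^ 3 = 1 := mul_left_cancel₀ hr (by linear_combination h₃)
    exact ⟨a, d, ha, hd, hM⟩
  · rintro ⟨a, d, ha, hd, hM⟩
    rw [glAct_cubicForm_eq_self_iff hM]
    simp [ha, hd]

end NonCube

theorem stmt16_general (k : Type*) [Field k] (p r : k) (hcube : ¬ ∃ lam : k, lam ^ 3 = p / r) :
    {M : GL (Fin 2) k | glAct k M (cubicForm k p 0 0 r) = cubicForm k p 0 0 r} =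
        ((rootsOfUnity 3 k).prod (rootsOfUnity 3 k)).map (diagonalGL k) ∧
      {M : GL (Fin 2) k |
        glAct k M (cubicForm k p 0 0 r) = cubicForm k p 0 0 r}.ncard =
          Nat.card (rootsOfUnity 3 k) ^ 2 := by
  have hstab : {M : GL (Fin 2) k | glAct k M (cubicForm k p 0 0 r) = cubicForm k p 0 0 r} =
      ((rootsOfUnity 3 k).prod (rootsOfUnity 3 k)).map (diagonalGL k) :=
    Set.ext (glAct_cubicForm_eq_self_iff_mem hcube)
  exact ⟨hstab, by rw [hstab, ncard_map_diagonalGL_prod, sq]⟩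

theorem stmt16 (k : Type*) [Field k] (h2 : (2 : k) ≠ 0) (h3 : (3 : k) ≠ 0)
    (ω : k) (hω : IsPrimitiveRoot ω 3)
    (p r : k) (hp : p ≠ 0) (hr : r ≠ 0)
    (hcube : ¬ ∃ lam : k, lam ^ 3 = p / r) :
    {M : GL (Fin 2) k | glAct k M (cubicForm k p 0 0 r) = cubicForm k p 0 0 r} =
        {M : GL (Fin 2) k | ∃ i j : Fin 3,
          (M : Matrix (Fin 2) (Fin 2) k) =
            !![ω ^ (i : ℕ), 0; 0, ω ^ (j : ℕ)]} ∧
      {M : GL (Fin 2) k |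
        glAct k M (cubicForm k p 0 0 r) = cubicForm k p 0 0 r}.ncard = 9 := by
  simpa only [coe_map_diagonalGL_rootsOfUnity hω, Nat.card_eq_fintype_card, hω.card_rootsOfUnity,
    Nat.reducePow] using stmt16_general k p r hcube
end

section
/- For every nondegenerate binary cubic form f over k, the stabilizer {M ∈ GL₂(k) : M·f = f} of f under the GL₂(k)-action by linear substitution of variables is a finite group. -/
/-
Over the algebraic closure a nondegenerate cubic form is a product of three pairwise
non-proportional linear factors. A matrix fixing the form sends each of its three zeros in the
projective line to a zero. Two stabilizing matrices inducing the same map on the zeros differ by a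
matrix with three distinct fixed points in the projective line, hence by a scalar `μ`, and
`μ ^ 3 = 1` because the form is homogeneous of degree three. So there are finitely many maps on the
zeros, each induced by finitely many stabilizing matrices.
-/

open Matrix MvPolynomial

section PlaneDet

variable {R : Type*} [CommRing R]

/-- The determinant of two vectors of the plane, which vanishes when they are proportional and so
expresses equality of points of the projective line without passing to quotients. -/
def planeDet (v w : Fin 2 → R) : R :=
  v 0 * w 1 - v 1 * w 0

theorem planeDet_mulVec (M : Matrix (Fin 2) (Fin 2) R) (v w : Fin 2 → R) :
    planeDet (M *ᵥ v) (M *ᵥ w) = M.det * planeDet v w := by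
  simp only [planeDet, mulVec, dotProduct, Fin.sum_univ_two, det_fin_two]
  ring

theorem planeDet_swap (v w : Fin 2 → R) : planeDet w v = -planeDet v w := by
  unfold planeDet
  ring

theorem ne_zero_of_planeDet_ne_zero_left {v w : Fin 2 → R} (h : planeDet v w ≠ 0) : v ≠ 0 := by
  rintro rfl
  simp [planeDet] at h

theorem eq_smul_one_of_planeDet_mulVec_self {N : Matrix (Fin 2) (Fin 2) R}
    (h : ∀ w, planeDet w (N *ᵥ w) = 0) : N = N 0 0 • 1 := by
  have h₁₀ : N 1 0 = 0 := by simpa [planeDet, mulVec, dotProduct] using h ![1, 0]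
  have h₀₁ : N 0 1 = 0 := by simpa [planeDet, mulVec, dotProduct] using h ![0, 1]
  have h₁₁ : N 1 1 = N 0 0 := by
    simpa [planeDet, mulVec, dotProduct, h₁₀, h₀₁, sub_eq_zero] using h ![1, 1]
  ext i j
  fin_cases i <;> fin_cases j <;> simp [h₁₀, h₀₁, h₁₁]

variable [NoZeroDivisors R]

theorem planeDet_eq_zero_of_common_right {v w x : Fin 2 → R} (hx : x ≠ 0)
    (hv : planeDet v x = 0) (hw : planeDet w x = 0) : planeDet v w = 0 := by
  have hx₀ : planeDet v w * x 0 = 0 := by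
    unfold planeDet at *
    linear_combination w 0 * hv - v 0 * hw
  have hx₁ : planeDet v w * x 1 = 0 := by
    unfold planeDet at *
    linear_combination w 1 * hv - v 1 * hw
  by_contra h
  exact hx (funext (Fin.forall_fin_two.2
    ⟨(mul_eq_zero.1 hx₀).resolve_left h, (mul_eq_zero.1 hx₁).resolve_left h⟩))

-- `w ↦ planeDet w (N *ᵥ w)` is a quadratic form, so Lagrange interpolation recovers it from its
-- values at three points of the projective line.
theorem planeDet_mulVec_self_eq_zero {N : Matrix (Fin 2) (Fin 2) R} {x y z : Fin 2 → R}
    (hxy : planeDet x y ≠ 0) (hxz : planeDet x z ≠ 0) (hyz : planeDet y z ≠ 0)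
    (hx : planeDet x (N *ᵥ x) = 0) (hy : planeDet y (N *ᵥ y) = 0) (hz : planeDet z (N *ᵥ z) = 0)
    (w : Fin 2 → R) : planeDet w (N *ᵥ w) = 0 := by
  have interpolation : planeDet x y * planeDet x z * planeDet y z * planeDet w (N *ᵥ w) =
      planeDet y z * planeDet w y * planeDet w z * planeDet x (N *ᵥ x) -
      planeDet x z * planeDet w x * planeDet w z * planeDet y (N *ᵥ y) +
      planeDet x y * planeDet w x * planeDet w y * planeDet z (N *ᵥ z) := by
    simp only [planeDet, mulVec, dotProduct, Fin.sum_univ_two]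
    ring
  rw [hx, hy, hz, mul_zero, mul_zero, mul_zero, sub_zero, add_zero] at interpolation
  exact (mul_eq_zero.1 interpolation).resolve_left (mul_ne_zero (mul_ne_zero hxy hxz) hyz)

variable {K : Type*} [Field K]

theorem exists_units_smul_of_planeDet_mulVec {M N : GL (Fin 2) K} {x y z : Fin 2 → K}
    (hxy : planeDet x y ≠ 0) (hxz : planeDet x z ≠ 0) (hyz : planeDet y z ≠ 0)
    (hx : planeDet (M *ᵥ x) (N *ᵥ x) = 0) (hy : planeDet (M *ᵥ y) (N *ᵥ y) = 0)
    (hz : planeDet (M *ᵥ z) (N *ᵥ z) = 0) : ∃ μ : Kˣ, N = μ • M := by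
  have fixes {w : Fin 2 → K} (hw : planeDet (M *ᵥ w) (N *ᵥ w) = 0) :
      planeDet w ((M⁻¹ * N).1 *ᵥ w) = 0 := by
    have hMN : N.1 *ᵥ w = M.1 *ᵥ ((M⁻¹ * N).1 *ᵥ w) := by
      rw [mulVec_mulVec, ← Units.val_mul, mul_inv_cancel_left]
    rw [hMN, planeDet_mulVec] at hw
    exact (mul_eq_zero.1 hw).resolve_left M.det_ne_zero
  obtain ⟨c, hc⟩ : ∃ c : K, (M⁻¹ * N).1 = c • 1 :=
    ⟨_, eq_smul_one_of_planeDet_mulVec_self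
      (planeDet_mulVec_self_eq_zero hxy hxz hyz (fixes hx) (fixes hy) (fixes hz))⟩
  have hc₀ : c ≠ 0 := by
    rintro rfl
    exact (M⁻¹ * N).ne_zero (by rw [hc, zero_smul])
  refine ⟨Units.mk0 c hc₀, Units.ext ?_⟩
  calc N.1 = M.1 * (M⁻¹ * N).1 := by
        rw [← Units.val_mul, mul_inv_cancel_left]
    _ = c • M.1 := by rw [hc, mul_smul_comm, mul_one]

end PlaneDet

section Action

variable {K : Type*} [Field K]

theorem eval_glAct (M : GL (Fin 2) K) (p : MvPolynomial (Fin 2) K) (w : Fin 2 → K) :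
    eval w (glAct K M p) = eval (M *ᵥ w) p := by
  have hX (i : Fin 2) : eval w (C (M i 0) * X 0 + C (M i 1) * X 1) = (M *ᵥ w) i := by
    simp only [map_add, map_mul, eval_C, eval_X, mulVec, dotProduct, Fin.sum_univ_two]
  have hC : (eval w).comp (algebraMap K (MvPolynomial (Fin 2) K)) = RingHom.id K :=
    RingHom.ext fun c ↦ eval_C c
  simp only [glAct, map_aeval, hX, hC]
  rfl

theorem map_glAct {L : Type*} [Field L] (φ : K →+* L) (M : GL (Fin 2) K)
    (p : MvPolynomial (Fin 2) K) :
    map φ (glAct K M p) = glAct L (GeneralLinearGroup.map φ M) (map φ p) := by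
  induction p using MvPolynomial.induction_on with
  | C c => simp [glAct, algebraMap_eq]
  | add p q hp hq => simp_all [glAct]
  | mul_X p i hp => simp_all [glAct]

theorem finite_stabilizer_of_map {L : Type*} [Field L] (φ : K →+* L)
    {p : MvPolynomial (Fin 2) K}
    (h : {M : GL (Fin 2) L | glAct L M (map φ p) = map φ p}.Finite) :
    {M : GL (Fin 2) K | glAct K M p = p}.Finite := by
  refine Set.Finite.of_injOn (f := GeneralLinearGroup.map φ) (fun M hM ↦ ?_) ?_ h
  · rw [Set.mem_ofPred_eq, ← map_glAct, hM]
  · exact (Units.map_injective (Matrix.map_injective φ.injective)).injOn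

end Action

section RootForm

variable {R : Type*} [CommRing R]

/-- The linear form `z₁u - z₀v = planeDet (u, v) z`, normalised so that `z ≠ 0` is its root in the
projective line. -/
noncomputable def rootForm (z : Fin 2 → R) : MvPolynomial (Fin 2) R :=
  C (z 1) * X 0 - C (z 0) * X 1

theorem eval_rootForm (z w : Fin 2 → R) : eval w (rootForm z) = planeDet w z := by
  simp only [rootForm, planeDet, map_sub, map_mul, eval_C, eval_X]
  ring

theorem rootForm_ne_zero {z : Fin 2 → R} (hz : z ≠ 0) : rootForm z ≠ 0 := by
  intro h
  have hw (w : Fin 2 → R) : planeDet w z = 0 := by rw [← eval_rootForm, h, map_zero]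
  refine hz (funext (Fin.forall_fin_two.2 ⟨?_, ?_⟩))
  · simpa [planeDet] using hw ![0, 1]
  · simpa [planeDet] using hw ![1, 0]

variable {ι : Type*} [Fintype ι]

theorem eval_prod_rootForm_eq_zero_iff [IsDomain R] {z : ι → Fin 2 → R} {w : Fin 2 → R} :
    eval w (∏ i, rootForm (z i)) = 0 ↔ ∃ i, planeDet w (z i) = 0 := by
  simp [map_prod, Finset.prod_eq_zero_iff, eval_rootForm]

variable {K : Type*} [Field K]

theorem glAct_smul_rootForm (μ : Kˣ) (M : GL (Fin 2) K) (z : Fin 2 → K) :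
    glAct K (μ • M) (rootForm z) = C (μ : K) * glAct K M (rootForm z) := by
  simp only [glAct, Units.val_smul, Matrix.smul_apply, Units.smul_def, smul_eq_mul,
    rootForm, map_sub, map_mul, algHom_C, algebraMap_eq, aeval_X]
  ring

variable {z : ι → Fin 2 → K}

theorem glAct_smul_prod_rootForm (μ : Kˣ) (M : GL (Fin 2) K) :
    glAct K (μ • M) (∏ i, rootForm (z i)) =
      C ((μ : K) ^ Fintype.card ι) * glAct K M (∏ i, rootForm (z i)) := by
  have glAct_prod (N : GL (Fin 2) K) :
      glAct K N (∏ i, rootForm (z i)) = ∏ i, glAct K N (rootForm (z i)) := map_prod _ _ _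
  simp only [glAct_prod, glAct_smul_rootForm, Finset.prod_mul_distrib, Finset.prod_const,
    Finset.card_univ, map_pow]

theorem exists_planeDet_mulVec_eq_zero_of_glAct_eq {M : GL (Fin 2) K}
    (hM : glAct K M (∏ i, rootForm (z i)) = ∏ i, rootForm (z i)) (i : ι) :
    ∃ j, planeDet (M *ᵥ z i) (z j) = 0 := by
  rw [← eval_prod_rootForm_eq_zero_iff, ← eval_glAct, hM, eval_prod_rootForm_eq_zero_iff]
  exact ⟨i, by rw [planeDet]; ring⟩

theorem pow_card_eq_one_of_glAct_smul_eq {μ : Kˣ} {M : GL (Fin 2) K} (hz : ∀ i, z i ≠ 0)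
    (hM : glAct K M (∏ i, rootForm (z i)) = ∏ i, rootForm (z i))
    (hμM : glAct K (μ • M) (∏ i, rootForm (z i)) = ∏ i, rootForm (z i)) :
    μ ^ Fintype.card ι = 1 := by
  rw [glAct_smul_prod_rootForm, hM] at hμM
  have hp : ∏ i, rootForm (z i) ≠ 0 :=
    Finset.prod_ne_zero_iff.2 fun i _ ↦ rootForm_ne_zero (hz i)
  have hC : C ((μ : K) ^ Fintype.card ι) = (1 : MvPolynomial (Fin 2) K) :=
    (mul_eq_right₀ hp).1 hμM
  exact Units.ext (C_injective (Fin 2) K (by simpa using hC))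

theorem finite_stabilizer_inducing_map (hz : Pairwise fun i j ↦ planeDet (z i) (z j) ≠ 0)
    (hι : 2 < Fintype.card ι) (σ : ι → ι) :
    {M : GL (Fin 2) K | glAct K M (∏ i, rootForm (z i)) = ∏ i, rootForm (z i) ∧
      ∀ i, planeDet (M *ᵥ z i) (z (σ i)) = 0}.Finite := by
  have : NeZero (Fintype.card ι) := ⟨by omega⟩
  have : Nontrivial ι := Fintype.one_lt_card_iff_nontrivial.1 (by omega)
  obtain ⟨i, j, l, hij, hil, hjl⟩ := Fintype.two_lt_card_iff.1 hι
  have hz₀ (i : ι) : z i ≠ 0 :=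
    let ⟨_, hj⟩ := exists_ne i
    ne_zero_of_planeDet_ne_zero_left (hz hj.symm)
  refine Set.not_infinite.1 fun infinite ↦ ?_
  obtain ⟨M, hM, hMσ⟩ := infinite.nonempty
  have roots_finite : (rootsOfUnity (Fintype.card ι) K : Set Kˣ).Finite :=
    Set.finite_coe_iff.1 (inferInstanceAs (Finite (rootsOfUnity (Fintype.card ι) K)))
  refine infinite ((roots_finite.image (· • M)).subset ?_)
  rintro N ⟨hN, hNσ⟩
  have same_image (m : ι) : planeDet (M *ᵥ z m) (N *ᵥ z m) = 0 :=
    planeDet_eq_zero_of_common_right (hz₀ (σ m)) (hMσ m) (hNσ m)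
  obtain ⟨μ, rfl⟩ := exists_units_smul_of_planeDet_mulVec (hz hij) (hz hil) (hz hjl)
    (same_image i) (same_image j) (same_image l)
  exact ⟨μ, pow_card_eq_one_of_glAct_smul_eq hz₀ hM hN, rfl⟩

theorem finite_stabilizer_prod_rootForm (hz : Pairwise fun i j ↦ planeDet (z i) (z j) ≠ 0)
    (hι : 2 < Fintype.card ι) :
    {M : GL (Fin 2) K | glAct K M (∏ i, rootForm (z i)) = ∏ i, rootForm (z i)}.Finite := by
  refine (Set.finite_iUnion (finite_stabilizer_inducing_map hz hι)).subset fun M hM ↦ ?_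
  choose σ hσ using exists_planeDet_mulVec_eq_zero_of_glAct_eq hM
  exact Set.mem_iUnion.2 ⟨σ, hM, hσ⟩

end RootForm

section CubicForm

variable {K : Type*} [Field K]

theorem map_cubicForm {L : Type*} [Field L] (φ : K →+* L) (a₀ a₁ a₂ a₃ : K) :
    map φ (cubicForm K a₀ a₁ a₂ a₃) = cubicForm L (φ a₀) (φ a₁) (φ a₂) (φ a₃) := by
  simp only [cubicForm, map_add, map_mul, map_pow, map_C, map_X]

theorem map_cubicDisc {L : Type*} [Field L] (φ : K →+* L) (a₀ a₁ a₂ a₃ : K) :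
    φ (cubicDisc K a₀ a₁ a₂ a₃) = cubicDisc L (φ a₀) (φ a₁) (φ a₂) (φ a₃) := by
  simp only [cubicDisc, map_sub, map_add, map_mul, map_pow, map_neg, map_ofNat]

theorem exists_linear_mul_linear_coeffs [IsAlgClosed K] (a b c : K) :
    ∃ p q r s : K, a = p * r ∧ b = p * s + q * r ∧ c = q * s := by
  by_cases ha : a = 0
  · exact ⟨0, 1, b, c, by simp [ha], by simp, by simp⟩
  obtain ⟨t, ht⟩ := IsAlgClosed.exists_root
    (.C a * .X ^ 2 + .C b * .X + .C c : Polynomial K) (by simp [Polynomial.degree_quadratic ha])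
  refine ⟨1, -t, a, b + a * t, by ring, by ring, ?_⟩
  simp only [Polynomial.IsRoot, Polynomial.eval_add, Polynomial.eval_mul, Polynomial.eval_pow,
    Polynomial.eval_C, Polynomial.eval_X] at ht
  linear_combination ht

theorem exists_linear_mul_quadratic_coeffs [IsAlgClosed K] (a₀ a₁ a₂ a₃ : K) :
    ∃ p q a b c : K, a₀ = p * a ∧ a₁ = p * b + q * a ∧ a₂ = p * c + q * b ∧ a₃ = q * c := by
  by_cases h₀ : a₀ = 0
  · exact ⟨0, 1, a₁, a₂, a₃, by simp [h₀], by simp, by simp, by simp⟩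
  obtain ⟨t, ht⟩ := IsAlgClosed.exists_root
    (.C a₀ * .X ^ 3 + .C a₁ * .X ^ 2 + .C a₂ * .X + .C a₃ : Polynomial K)
    (by simp [Polynomial.degree_cubic h₀])
  refine ⟨1, -t, a₀, a₁ + a₀ * t, a₂ + (a₁ + a₀ * t) * t, by ring, by ring, by ring, ?_⟩
  simp only [Polynomial.IsRoot, Polynomial.eval_add, Polynomial.eval_mul, Polynomial.eval_pow,
    Polynomial.eval_C, Polynomial.eval_X] at ht
  linear_combination ht

theorem exists_cubicForm_eq_prod_rootForm [IsAlgClosed K] (a₀ a₁ a₂ a₃ : K) :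
    ∃ z : Fin 3 → Fin 2 → K, cubicForm K a₀ a₁ a₂ a₃ = ∏ i, rootForm (z i) ∧
      cubicDisc K a₀ a₁ a₂ a₃ =
        (planeDet (z 0) (z 1) * planeDet (z 0) (z 2) * planeDet (z 1) (z 2)) ^ 2 := by
  obtain ⟨p, q, a, b, c, rfl, rfl, rfl, rfl⟩ := exists_linear_mul_quadratic_coeffs a₀ a₁ a₂ a₃
  obtain ⟨r, s, t, u, rfl, rfl, rfl⟩ := exists_linear_mul_linear_coeffs a b c
  refine ⟨![![-q, p], ![-s, r], ![-u, t]], ?_, ?_⟩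
  · simp only [cubicForm, rootForm, Fin.prod_univ_three, C_mul, C_add, C_neg, cons_val]
    ring
  · simp only [cubicDisc, planeDet, cons_val]
    ring

theorem finite_stabilizer_cubicForm_of_isAlgClosed [IsAlgClosed K] {a₀ a₁ a₂ a₃ : K}
    (hΔ : cubicDisc K a₀ a₁ a₂ a₃ ≠ 0) :
    {M : GL (Fin 2) K | glAct K M (cubicForm K a₀ a₁ a₂ a₃) = cubicForm K a₀ a₁ a₂ a₃}.Finite := by
  obtain ⟨z, hf, hdisc⟩ := exists_cubicForm_eq_prod_rootForm a₀ a₁ a₂ a₃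
  have hz : Pairwise fun i j ↦ planeDet (z i) (z j) ≠ 0 := by
    rw [hdisc] at hΔ
    intro i j hij
    fin_cases i <;> fin_cases j <;>
      simp_all [planeDet_swap (z 0) (z 1), planeDet_swap (z 0) (z 2), planeDet_swap (z 1) (z 2)]
  rw [hf]
  exact finite_stabilizer_prod_rootForm hz (by simp)

end CubicForm

theorem stmt18_general (k : Type*) [Field k] (a₀ a₁ a₂ a₃ : k)
    (hΔ : cubicDisc k a₀ a₁ a₂ a₃ ≠ 0) :
    {M : GL (Fin 2) k |
      glAct k M (cubicForm k a₀ a₁ a₂ a₃) = cubicForm k a₀ a₁ a₂ a₃}.Finite := by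
  let φ := algebraMap k (AlgebraicClosure k)
  apply finite_stabilizer_of_map φ
  rw [map_cubicForm]
  apply finite_stabilizer_cubicForm_of_isAlgClosed
  rw [← map_cubicDisc]
  exact (map_ne_zero φ).2 hΔ

theorem stmt18 (k : Type*) [Field k] (h2 : (2 : k) ≠ 0) (h3 : (3 : k) ≠ 0)
    (ω : k) (hω : IsPrimitiveRoot ω 3)
    (a₀ a₁ a₂ a₃ : k) (hΔ : cubicDisc k a₀ a₁ a₂ a₃ ≠ 0) :
    {M : GL (Fin 2) k |
      glAct k M (cubicForm k a₀ a₁ a₂ a₃) = cubicForm k a₀ a₁ a₂ a₃}.Finite :=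
  stmt18_general k a₀ a₁ a₂ a₃ hΔ
end
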